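/- Let u, v ∈ F_{q^m}^n with rk_q(u) = rk_q(v) = n, θ a generator of Gal(F_{q^m}/F_q), and 1 ≤ k ≤ n−1. Then G_{k,θ}(u) = G_{k,θ}(v) if and only if u = λv for some λ ∈ F_{q^m}^*. -/

import Mathlib

open Submodule

noncomputable section

variable {E : Type} [Field E]

instance (σ : E ≃+* E) : RingHomSurjective (σ : E →+* E) := ⟨σ.surjective⟩

/-- Entrywise application of a field automorphism to vectors, as a semilinear map. -/
def entrywiseR {n : ℕ} (σ : E ≃+* E) :
    (Fin n → E) →ₛₗ[(σ : E →+* E)] (Fin n → E) where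
  toFun v := fun i => σ (v i)
  map_add' x y := by funext i; simp
  map_smul' r x := by funext i; simp [smul_eq_mul, map_mul]

/-- Image of a code under entrywise application of a ring automorphism. -/
def mapCodeR {n : ℕ} (σ : E ≃+* E) (C : Submodule E (Fin n → E)) :
    Submodule E (Fin n → E) :=
  C.map (entrywiseR σ)

/-- Image of a code under entrywise application of an F-algebra automorphism. -/
def mapCode {F : Type} [Field F] [Algebra F E] {n : ℕ} (σ : E ≃ₐ[F] E)
    (C : Submodule E (Fin n → E)) : Submodule E (Fin n → E) :=
  mapCodeR σ.toRingEquiv C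

/-- Right action of a matrix over the base field on a code. -/
def matAct (F : Type) [Field F] [Algebra F E] {n : ℕ} (A : Matrix (Fin n) (Fin n) F)
    (C : Submodule E (Fin n → E)) : Submodule E (Fin n → E) :=
  C.map ((A.map (algebraMap F E)).vecMulLinear)

/-- Semilinear equivalence of rank-metric codes: C₁ = τ(C₂)·A. -/
def CodeEquiv (F : Type) [Field F] [Algebra F E] {n : ℕ}
    (C₁ C₂ : Submodule E (Fin n → E)) : Prop :=
  ∃ (τ : E ≃+* E) (A : Matrix (Fin n) (Fin n) F), IsUnit A ∧
    C₁ = matAct F A (mapCodeR τ C₂)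

/-- Gabidulin code. -/
def Gab {F : Type} [Field F] [Algebra F E] {n : ℕ} (θ : E ≃ₐ[F] E) (k : ℕ)
    (g : Fin n → E) : Submodule E (Fin n → E) :=
  Submodule.span E (Set.range fun j : Fin k => fun i => (θ ^ (j : ℕ)) (g i))

/-- Sum of the images of C under the first i+1 powers of σ. -/
def sumCode {F : Type} [Field F] [Algebra F E] {n : ℕ} (σ : E ≃ₐ[F] E) (i : ℕ)
    (C : Submodule E (Fin n → E)) : Submodule E (Fin n → E) :=
  ⨆ j : Fin (i + 1), mapCode (σ ^ (j : ℕ)) C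

/-- Intersection of the images of C under the first i+1 powers of σ. -/
def interCode {F : Type} [Field F] [Algebra F E] {n : ℕ} (σ : E ≃ₐ[F] E) (i : ℕ)
    (C : Submodule E (Fin n → E)) : Submodule E (Fin n → E) :=
  ⨅ j : Fin (i + 1), mapCode (σ ^ (j : ℕ)) C

/-- Dual code with respect to the standard inner product. -/
def dualCode {n : ℕ} (C : Submodule E (Fin n → E)) : Submodule E (Fin n → E) where
  carrier := {u | ∀ v ∈ C, ∑ i, u i * v i = 0}
  add_mem' := by
    intro a b ha hb v hv
    simp only [Set.mem_setOf_eq] at *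
    simp only [Pi.add_apply, add_mul, Finset.sum_add_distrib, ha v hv, hb v hv, add_zero]
  zero_mem' := by intro v hv; simp
  smul_mem' := by
    intro c a ha v hv
    simp only [Set.mem_setOf_eq] at *
    simp only [Pi.smul_apply, smul_eq_mul, mul_assoc, ← Finset.mul_sum, ha v hv, mul_zero]

/-- Twisted Gabidulin code. -/
def TGab {F : Type} [Field F] [Algebra F E] {n : ℕ} (θ : E ≃ₐ[F] E) (k : ℕ) (η : E)
    (g : Fin n → E) : Submodule E (Fin n → E) :=
  Submodule.span E
    (insert (fun i => g i + η * (θ ^ k) (g i))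
      (Set.range fun j : Fin (k - 1) => fun i => (θ ^ ((j : ℕ) + 1)) (g i)))

/-!
The `j`-th generator of `Gab θ k v` is column `j` of the Moore matrix with entries
`θ ^ j (v i)`. A linear relation between the rows of that matrix can be normalized to have some
coefficient `1`; subtracting it from its image under `θ` kills this coefficient, so by induction
all coefficients are fixed by `θ`, that is, they lie in the base field, and the relation is one
between the entries of `v`. Hence the columns `v, θ v, …, θ ^ k v` are independent as soon as `v`
has rank greater than `k`.

Now let `u ∈ Gab θ k v` have `θ`-degree `j ≥ 1` in terms of `v`. Then `θ ^ (k - j) u` has degree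
exactly `k`, so it is outside `Gab θ k v` although it is a generator of `Gab θ k u`. If the codes
agree, `u` has therefore degree `0`, that is, it is a multiple of `v`.
-/

section MooreMatrix

variable {K L ι : Type*} [Field K] [Field L] [Algebra K L]

theorem mem_range_algebraMap_of_apply_eq_self_of_forall_mem_zpowers [IsGalois K L]
    {θ : L ≃ₐ[K] L} (hθ : ∀ τ : L ≃ₐ[K] L, τ ∈ Subgroup.zpowers θ) {x : L} (hx : θ x = x) :
    x ∈ Set.range (algebraMap K L) := by
  have zpowers_le : Subgroup.zpowers θ ≤ MulAction.stabilizer (L ≃ₐ[K] L) x :=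
    Subgroup.zpowers_le.2 hx
  exact (InfiniteGalois.mem_range_algebraMap_iff_fixed x).2 fun τ => zpowers_le (hθ τ)

/-- The matrix whose row `i` lists the first `m` iterates `v i, θ (v i), …, θ ^ (m - 1) (v i)`;
its columns are the canonical generators of the Gabidulin code of `v`. -/
def mooreMatrix (θ : L ≃ₐ[K] L) (m : ℕ) (v : ι → L) : Matrix ι (Fin m) L :=
  Matrix.of fun i j => (θ ^ (j : ℕ)) (v i)

namespace mooreMatrix

theorem sum_apply_sub_mul_pow_apply_eq_zero [Fintype ι] (θ : L ≃ₐ[K] L) {e v : ι → L} {j : ℕ}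
    (hj : ∑ i, e i * (θ ^ j) (v i) = 0) (hj_succ : ∑ i, e i * (θ ^ (j + 1)) (v i) = 0) :
    ∑ i, (θ (e i) - e i) * (θ ^ j) (θ (v i)) = 0 := by
  have apply_hj : ∑ i, θ (e i) * (θ ^ (j + 1)) (v i) = 0 := by
    simpa only [map_sum, map_mul, map_zero, pow_succ', AlgEquiv.mul_apply] using congrArg θ hj
  have sum_sub : ∑ i, (θ (e i) - e i) * (θ ^ (j + 1)) (v i) = 0 := by
    simp only [sub_mul, Finset.sum_sub_distrib, apply_hj, hj_succ, sub_zero]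
  simpa only [pow_succ, AlgEquiv.mul_apply] using sum_sub

theorem eq_zero_of_forall_sum_mul_pow_apply_eq_zero {θ : L ≃ₐ[K] L}
    (hθ : ∀ x, θ x = x → x ∈ Set.range (algebraMap K L)) {n : ℕ} {v d : Fin n → L}
    (hv : LinearIndependent K v) (hd : ∀ j < n, ∑ i, d i * (θ ^ j) (v i) = 0) : d = 0 := by
  induction n with
  | zero => exact Subsingleton.elim _ _
  | succ n ih =>
    by_contra hd_ne
    obtain ⟨i₀, hi₀⟩ := Function.ne_iff.1 hd_ne
    let e : Fin (n + 1) → L := fun i => (d i₀)⁻¹ * d i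
    have e_i₀ : e i₀ = 1 := inv_mul_cancel₀ hi₀
    have sum_e : ∀ j < n + 1, ∑ i, e i * (θ ^ j) (v i) = 0 := fun j hj => by
      simp only [e, mul_assoc, ← Finset.mul_sum, hd j hj, mul_zero]
    have others_fixed : (fun i => θ (e (i₀.succAbove i)) - e (i₀.succAbove i)) = 0 := by
      have others_independent : LinearIndependent K fun i => θ (v (i₀.succAbove i)) :=
        (hv.comp _ Fin.succAbove_right_injective).map' θ.toLinearMap
          (LinearMap.ker_eq_bot.2 θ.injective)
      refine ih others_independent fun j hj => ?_
      have sum_sub := sum_apply_sub_mul_pow_apply_eq_zero θ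
        (sum_e j (by lia)) (sum_e (j + 1) (by lia))
      simpa [Fin.sum_univ_succAbove _ i₀, e_i₀] using sum_sub
    have e_fixed (i) : θ (e i) = e i := by
      obtain rfl | ⟨t, rfl⟩ := i₀.eq_self_or_eq_succAbove i
      · rw [e_i₀, map_one]
      · exact sub_eq_zero.1 (congrFun others_fixed t)
    choose c hc using fun i => hθ (e i) (e_fixed i)
    have sum_c : ∑ i, c i • v i = 0 := by
      simpa [Algebra.smul_def, hc] using sum_e 0 n.succ_pos
    have c_i₀ : c i₀ = 0 := Fintype.linearIndependent_iff.1 hv c sum_c i₀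
    exact one_ne_zero (by rw [← e_i₀, ← hc, c_i₀, map_zero])

theorem linearIndependent_row {θ : L ≃ₐ[K] L}
    (hθ : ∀ x, θ x = x → x ∈ Set.range (algebraMap K L)) {n : ℕ} {v : Fin n → L}
    (hv : LinearIndependent K v) : LinearIndependent L (mooreMatrix θ n v).row := by
  refine Fintype.linearIndependent_iff.2 fun d hd => congrFun ?_
  refine eq_zero_of_forall_sum_mul_pow_apply_eq_zero hθ hv fun j hj => ?_
  simpa [mooreMatrix] using congrFun hd ⟨j, hj⟩

theorem linearIndependent_col [Finite ι] {θ : L ≃ₐ[K] L}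
    (hθ : ∀ x, θ x = x → x ∈ Set.range (algebraMap K L)) {m : ℕ} {v : ι → L}
    (hm : m ≤ Module.finrank K (span K (Set.range v))) :
    LinearIndependent L (mooreMatrix θ m v).col := by
  have : Module.Finite K (span K (Set.range v)) :=
    Module.Finite.span_of_finite K (Set.finite_range v)
  obtain ⟨w, w_mem, -, w_independent⟩ := exists_fun_fin_finrank_span_eq K (Set.range v)
  choose φ hφ using w_mem
  let ψ : Fin m → ι := φ ∘ Fin.castLE hm
  have subfamily_independent : LinearIndependent K (v ∘ ψ) := by
    have : v ∘ ψ = w ∘ Fin.castLE hm := funext fun i => hφ _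
    rw [this]
    exact w_independent.comp _ (Fin.castLE_injective hm)
  have square_col : LinearIndependent L (mooreMatrix θ m (v ∘ ψ)).col :=
    Matrix.linearIndependent_cols_iff_isUnit.2 <|
      Matrix.linearIndependent_rows_iff_isUnit.1 <| linearIndependent_row hθ subfamily_independent
  exact LinearIndependent.of_comp (LinearMap.funLeft L L ψ) square_col

end mooreMatrix

end MooreMatrix

section Gabidulin

variable {F : Type} [Field F] [Algebra F E] {n : ℕ} (θ : E ≃ₐ[F] E)

theorem pow_apply_mem_Gab {j k : ℕ} (hj : j < k) (g : Fin n → E) :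
    (fun i => (θ ^ j) (g i)) ∈ Gab θ k g :=
  subset_span ⟨⟨j, hj⟩, rfl⟩

theorem self_mem_Gab {k : ℕ} (hk : 1 ≤ k) (g : Fin n → E) : g ∈ Gab θ k g :=
  pow_apply_mem_Gab θ hk g

theorem Gab_one (g : Fin n → E) : Gab θ 1 g = span E {g} := by
  simp [Gab]

theorem Gab_succ (k : ℕ) (g : Fin n → E) :
    Gab θ (k + 1) g = Gab θ k g ⊔ span E {fun i => (θ ^ k) (g i)} := by
  have range_succ : (Set.range fun (j : Fin (k + 1)) i => (θ ^ (j : ℕ)) (g i)) =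
      (Set.range fun (j : Fin k) i => (θ ^ (j : ℕ)) (g i)) ∪ {fun i => (θ ^ k) (g i)} := by
    ext x
    simp [Fin.exists_fin_succ', or_comm, eq_comm]
  rw [Gab, Gab, range_succ, span_union]

theorem mapCode_pow_Gab_le (s k : ℕ) (g : Fin n → E) :
    mapCode (θ ^ s) (Gab θ k g) ≤ Gab θ (s + k) g := by
  refine (map_span_le _ _ _).2 ?_
  rintro _ ⟨j, rfl⟩
  have generator_mem := pow_apply_mem_Gab θ (Nat.add_lt_add_left j.2 s) g
  rwa [pow_add] at generator_mem

theorem Gab_smul_le (k : ℕ) (c : E) (g : Fin n → E) : Gab θ k (c • g) ≤ Gab θ k g := by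
  refine span_le.2 ?_
  rintro _ ⟨j, rfl⟩
  simpa only [Pi.smul_def, smul_eq_mul, map_mul, SetLike.mem_coe] using
    smul_mem _ ((θ ^ (j : ℕ)) c) (pow_apply_mem_Gab θ j.2 g)

theorem Gab_smul (k : ℕ) {c : E} (hc : c ≠ 0) (g : Fin n → E) :
    Gab θ k (c • g) = Gab θ k g := by
  refine (Gab_smul_le θ k c g).antisymm ?_
  simpa [smul_smul, hc] using Gab_smul_le θ k c⁻¹ (c • g)

theorem Gab_zero (k : ℕ) : Gab θ k (0 : Fin n → E) = ⊥ :=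
  span_eq_bot.2 <| by
    rintro _ ⟨j, rfl⟩
    exact funext fun _ => map_zero _

variable {θ} {k : ℕ} {u v : Fin n → E}

theorem pow_apply_notMem_Gab (hθ : ∀ x, θ x = x → x ∈ Set.range (algebraMap F E))
    (hkv : k < Module.finrank F (span F (Set.range v))) :
    (fun i => (θ ^ k) (v i)) ∉ Gab θ k v := by
  have col_independent := mooreMatrix.linearIndependent_col hθ (Nat.succ_le_of_lt hkv)
  have last_notMem := col_independent.notMem_span_image
    (s := Set.range Fin.castSucc) (x := Fin.last k) (by simp)
  rwa [← Set.range_comp] at last_notMem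

theorem mem_Gab_of_mem_Gab_succ_of_pow_apply_mem
    (hθ : ∀ x, θ x = x → x ∈ Set.range (algebraMap F E)) {s j : ℕ}
    (hsj : s + j < Module.finrank F (span F (Set.range v))) (hu : u ∈ Gab θ (j + 1) v)
    (hsu : (fun i => (θ ^ s) (u i)) ∈ Gab θ (s + j) v) : u ∈ Gab θ j v := by
  rw [Gab_succ] at hu
  obtain ⟨y, hy, _, hz, rfl⟩ := mem_sup.1 hu
  obtain ⟨c, rfl⟩ := mem_span_singleton.1 hz
  have hsy : (fun i => (θ ^ s) (y i)) ∈ Gab θ (s + j) v :=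
    mapCode_pow_Gab_le θ s j v (mem_map_of_mem hy)
  have top_mem : (θ ^ s) c • (fun i => (θ ^ (s + j)) (v i)) ∈ Gab θ (s + j) v := by
    convert sub_mem hsu hsy using 1
    ext i
    simp [pow_add]
  have c_eq_zero : c = 0 := by
    by_contra hc
    have apply_ne_zero : (θ ^ s) c ≠ 0 := (map_ne_zero (θ ^ s)).2 hc
    exact pow_apply_notMem_Gab hθ hsj ((smul_mem_iff _ apply_ne_zero).1 top_mem)
  rwa [c_eq_zero, zero_smul, add_zero]

theorem mem_span_singleton_of_Gab_le_Gab
    (hθ : ∀ x, θ x = x → x ∈ Set.range (algebraMap F E)) (hk : 1 ≤ k)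
    (hkv : k < Module.finrank F (span F (Set.range v))) (huv : Gab θ k u ≤ Gab θ k v) :
    u ∈ span E {v} := by
  rw [← Gab_one θ]
  refine Nat.decreasingInduction' (P := fun j => u ∈ Gab θ j v) (fun j hjk hj hu => ?_) hk
    (huv (self_mem_Gab θ hk u))
  have sub_add : k - j + j = k := Nat.sub_add_cancel hjk.le
  refine mem_Gab_of_mem_Gab_succ_of_pow_apply_mem hθ (s := k - j) (by rwa [sub_add]) hu ?_
  rw [sub_add]
  exact huv (pow_apply_mem_Gab θ (by lia) u)

end Gabidulin

theorem stmt17_general {F : Type} [Field F] [Algebra F E] {n k : ℕ} (hk : 1 ≤ k)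
    {θ : E ≃ₐ[F] E} (hθ : ∀ x, θ x = x → x ∈ Set.range (algebraMap F E)) {u v : Fin n → E}
    (hkv : k < Module.finrank F (span F (Set.range v))) :
    Gab θ k u = Gab θ k v ↔ ∃ lam : E, lam ≠ 0 ∧ u = lam • v := by
  constructor
  · intro huv
    obtain ⟨c, rfl⟩ := mem_span_singleton.1 (mem_span_singleton_of_Gab_le_Gab hθ hk hkv huv.le)
    refine ⟨c, ?_, rfl⟩
    rintro rfl
    have v_eq_zero : v = 0 := by
      have v_mem := self_mem_Gab θ hk v
      rwa [← huv, zero_smul, Gab_zero] at v_mem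
    exact pow_apply_notMem_Gab hθ hkv (by simp [v_eq_zero, ← Pi.zero_def])
  · rintro ⟨c, hc, rfl⟩
    exact Gab_smul θ k hc v

/-- `G_{k,θ}(u) = G_{k,θ}(v)` iff `u = λ v` for some nonzero `λ`. -/
theorem stmt17 {F : Type} [Field F] [Algebra F E] [Fintype F] [Fintype E]
    (q m n k : ℕ) (hq : IsPrimePow q)
    (hF : Fintype.card F = q) (hE : Fintype.card E = q ^ m)
    (hk : 1 ≤ k) (hkn : k ≤ n - 1)
    (θ : E ≃ₐ[F] E) (hθ : ∀ τ : E ≃ₐ[F] E, τ ∈ Subgroup.zpowers θ)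
    (u v : Fin n → E)
    (hu : Module.finrank F (Submodule.span F (Set.range u)) = n)
    (hv : Module.finrank F (Submodule.span F (Set.range v)) = n) :
    Gab θ k u = Gab θ k v ↔ ∃ lam : E, lam ≠ 0 ∧ u = lam • v := by
  exact stmt17_general hk
    (fun _ => mem_range_algebraMap_of_apply_eq_self_of_forall_mem_zpowers hθ) (by lia)
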